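/- arXiv:2105.00710 — 5 statements merged into one kernel-verified Lean document; each statement's English description precedes it below -/
import Mathlib

section
/- Let (X1,X2) and (Y1,Y2) be pairs of jointly distributed random variables over finite domains such that the support of X1 is contained in the support of Y1 and, for every x1 in the support of X1, the support of the conditional distribution X2|X1=x1 is contained in the support of Y2|Y1=x1. Then Δ((X1,X2),(Y1,Y2)) ≤ sqrt((ln 2 / 2) · D_KL(X1 ‖ Y1)) + sqrt((ln 2 / 2) · E_{x1←X1}[ D_KL( X2|X1=x1 ‖ Y2|Y1=x1 ) ]). -/
open Finset Real

/-- Statistical distance between two distributions on a finite type. -/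
noncomputable def statDist {Ω : Type*} [Fintype Ω] (p q : Ω → ℝ) : ℝ :=
  (1 / 2) * ∑ x, |p x - q x|

/-- Relative entropy (KL divergence, in bits) between two distributions on a finite type. -/
noncomputable def klDiv {Ω : Type*} [Fintype Ω] (p q : Ω → ℝ) : ℝ :=
  ∑ x, p x * Real.logb 2 (p x / q x)

lemma aux_deriv (t : ℝ) (ht : 0 < t) :
    HasDerivAt (fun t : ℝ => Real.log t - 1 + t⁻¹ - 3 * (t - 1) ^ 2 / (t * (2 * t + 4)))
      ((t - 1) ^ 3 / (t ^ 2 * (t + 2) ^ 2)) t := by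
  have h1 := Real.hasDerivAt_log ht.ne'
  have h2 := hasDerivAt_inv ht.ne'
  have hid := hasDerivAt_id' t
  have h3 := (((hid.sub_const 1).pow 2).const_mul 3)
  have h4 := hid.mul ((hid.const_mul 2).add_const 4)
  have hne : t * (2 * t + 4) ≠ 0 := by positivity
  have h5 := ((h1.sub_const 1).add h2).sub (h3.div h4 hne)
  refine h5.congr_deriv ?_
  have : t + 2 ≠ 0 := by positivity
  have : 2 * t + 4 ≠ 0 := by positivity
  simp
  field_simp
  ring

lemma aux_phi (t : ℝ) (ht : 0 < t) :
    0 ≤ Real.log t - 1 + t⁻¹ - 3 * (t - 1) ^ 2 / (t * (2 * t + 4)) := by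
  set φ : ℝ → ℝ := fun t : ℝ => Real.log t - 1 + t⁻¹ - 3 * (t - 1) ^ 2 / (t * (2 * t + 4)) with hφ
  have h1 : φ 1 = 0 := by simp [hφ]
  change 0 ≤ φ t
  rw [← h1]
  rcases le_total t 1 with h | h
  · have hanti : AntitoneOn φ (Set.Icc t 1) := by
      refine antitoneOn_of_deriv_nonpos (convex_Icc _ _) ?_ ?_ ?_
      · intro x hx
        exact (aux_deriv x (ht.trans_le hx.1)).continuousAt.continuousWithinAt
      · intro x hx
        rw [interior_Icc] at hx
        exact (aux_deriv x (ht.trans hx.1)).differentiableAt.differentiableWithinAt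
      · intro x hx
        rw [interior_Icc] at hx
        rw [(aux_deriv x (ht.trans hx.1)).deriv]
        apply div_nonpos_of_nonpos_of_nonneg _ (by positivity)
        have : x - 1 ≤ 0 := by linarith [hx.2]
        nlinarith [mul_nonneg (sq_nonneg (x - 1)) (neg_nonneg.2 this)]
    exact hanti ⟨le_rfl, h⟩ ⟨h, le_rfl⟩ h
  · have hmono : MonotoneOn φ (Set.Icc 1 t) := by
      refine monotoneOn_of_deriv_nonneg (convex_Icc _ _) ?_ ?_ ?_
      · intro x hx
        exact (aux_deriv x (one_pos.trans_le hx.1)).continuousAt.continuousWithinAt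
      · intro x hx
        rw [interior_Icc] at hx
        exact (aux_deriv x (one_pos.trans hx.1)).differentiableAt.differentiableWithinAt
      · intro x hx
        rw [interior_Icc] at hx
        rw [(aux_deriv x (one_pos.trans hx.1)).deriv]
        have : 0 ≤ x - 1 := by linarith [hx.1]
        positivity
    exact hmono ⟨le_rfl, h⟩ ⟨h, le_rfl⟩ h

lemma aux_point (a b : ℝ) (ha : 0 ≤ a) (hb : 0 ≤ b) (hab : 0 < a → 0 < b) :
    |a - b| ^ 2 ≤ ((2 * a + 4 * b) / 3) * (a * Real.log (a / b) - a + b) := by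
  rw [sq_abs]
  rcases ha.eq_or_lt with rfl | ha
  · simp; nlinarith [sq_nonneg b]
  have hb' := hab ha
  have h := aux_phi (a / b) (by positivity)
  set L := Real.log (a / b)
  have e : ((2 * a + 4 * b) / 3) * (a * L - a + b) - (a - b) ^ 2 =
     (L - 1 + (a / b)⁻¹ - 3 * (a / b - 1) ^ 2 / (a / b * (2 * (a / b) + 4)))
        * (a * ((2 * a + 4 * b) / 3)) := by
    have : 2 * a + 4 * b ≠ 0 := by positivity
    have h2 : 2 * (a / b) + 4 = (2 * a + 4 * b) / b := by field_simp
    rw [h2]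
    field_simp
  have : 0 ≤ ((2 * a + 4 * b) / 3) * (a * L - a + b) - (a - b) ^ 2 := by
    rw [e]; exact mul_nonneg h (by positivity)
  linarith

lemma pinsker_aux {Ω : Type*} [Fintype Ω] (p q : Ω → ℝ)
    (hp0 : ∀ z, 0 ≤ p z) (hp1 : ∑ z, p z = 1)
    (hq0 : ∀ z, 0 ≤ q z) (hq1 : ∑ z, q z = 1)
    (hs : ∀ z, 0 < p z → 0 < q z) :
    statDist p q ≤ Real.sqrt ((Real.log 2 / 2) * klDiv p q) := by
  apply Real.le_sqrt_of_sq_le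
  have hl : Real.log 2 ≠ 0 := (Real.log_pos one_lt_two).ne'
  have hk : Real.log 2 * klDiv p q = ∑ x, p x * Real.log (p x / q x) := by
    unfold klDiv
    rw [Finset.mul_sum]
    refine Finset.sum_congr rfl fun x _ => ?_
    rw [Real.logb]
    field_simp
  have hfn : ∀ x, 0 ≤ (2 * p x + 4 * q x) / 3 := fun x => by
    have := hp0 x; have := hq0 x; positivity
  have hgn : ∀ x, 0 ≤ p x * Real.log (p x / q x) - p x + q x := fun x => by
    have h := aux_point (p x) (q x) (hp0 x) (hq0 x) (hs x)
    rcases (hp0 x).eq_or_lt with h0 | h0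
    · rw [← h0]; simpa using hq0 x
    · have hq := hs x h0
      exact nonneg_of_mul_nonneg_right ((sq_nonneg _).trans h) (by positivity)
  have hcs := Finset.sum_sq_le_sum_mul_sum_of_sq_le_mul Finset.univ
    (r := fun x => |p x - q x|) (fun x _ => hfn x) (fun x _ => hgn x)
    (fun x _ => aux_point (p x) (q x) (hp0 x) (hq0 x) (hs x))
  rw [← Finset.sum_div, Finset.sum_add_distrib, Finset.sum_add_distrib, Finset.sum_sub_distrib,
    ← Finset.mul_sum, ← Finset.mul_sum, hp1, hq1, ← hk] at hcs
  unfold statDist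
  nlinarith [hcs]

/-- For jointly distributed pairs `(X1,X2) ~ p` and `(Y1,Y2) ~ q` over finite
domains, with the support of `X1` contained in the support of `Y1` and, for every `x1` in the
support of `X1`, the support of `X2 | X1 = x1` contained in that of `Y2 | Y1 = x1`, we have
`Δ((X1,X2),(Y1,Y2)) ≤ √((ln 2 / 2)·D(X1‖Y1)) + √((ln 2 / 2)·E_{x1←X1}[D(X2|x1 ‖ Y2|x1)])`. -/
theorem stmt0 {Ω₁ Ω₂ : Type*} [Fintype Ω₁] [Fintype Ω₂]
    (p q : Ω₁ × Ω₂ → ℝ)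
    (hp0 : ∀ z, 0 ≤ p z) (hp1 : ∑ z, p z = 1)
    (hq0 : ∀ z, 0 ≤ q z) (hq1 : ∑ z, q z = 1)
    (hsupp1 : ∀ x1, 0 < ∑ x2, p (x1, x2) → 0 < ∑ x2, q (x1, x2))
    (hsupp2 : ∀ x1 x2, 0 < ∑ y2, p (x1, y2) → 0 < p (x1, x2) → 0 < q (x1, x2)) :
    statDist p q ≤
      Real.sqrt ((Real.log 2 / 2) *
          klDiv (fun x1 => ∑ x2, p (x1, x2)) (fun x1 => ∑ x2, q (x1, x2))) +
      Real.sqrt ((Real.log 2 / 2) *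
          ∑ x1, (∑ x2, p (x1, x2)) *
            klDiv (fun x2 => p (x1, x2) / ∑ y2, p (x1, y2))
                  (fun x2 => q (x1, x2) / ∑ y2, q (x1, y2))) := by
  classical
  set P : Ω₁ → ℝ := fun x1 => ∑ x2, p (x1, x2) with hP
  set Q : Ω₁ → ℝ := fun x1 => ∑ x2, q (x1, x2) with hQ
  have hP0 : ∀ x, 0 ≤ P x := fun x => Finset.sum_nonneg fun _ _ => hp0 _
  have hQ0 : ∀ x, 0 ≤ Q x := fun x => Finset.sum_nonneg fun _ _ => hq0 _
  have hP1 : ∑ x, P x = 1 := by rw [← hp1, Fintype.sum_prod_type]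
  have hQ1 : ∑ x, Q x = 1 := by rw [← hq1, Fintype.sum_prod_type]
  have hpP : ∀ x y, p (x, y) ≤ P x := fun x y =>
    Finset.single_le_sum (f := fun y => p (x, y)) (fun _ _ => hp0 _) (Finset.mem_univ y)
  have hqQ : ∀ x y, q (x, y) ≤ Q x := fun x y =>
    Finset.single_le_sum (f := fun y => q (x, y)) (fun _ _ => hq0 _) (Finset.mem_univ y)
  have hPQ : ∀ x, Q x = 0 → P x = 0 := fun x h => by
    by_contra h'
    exact (hsupp1 x (lt_of_le_of_ne (hP0 x) (Ne.symm h'))).ne' h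
  set r : Ω₁ × Ω₂ → ℝ := fun z => P z.1 / Q z.1 * q z with hr
  have hr0 : ∀ z, 0 ≤ r z := fun z => mul_nonneg (div_nonneg (hP0 _) (hQ0 _)) (hq0 _)
  have hr1 : ∑ z, r z = 1 := by
    rw [Fintype.sum_prod_type, ← hP1]
    refine Finset.sum_congr rfl fun x _ => ?_
    simp only [hr]
    rw [← Finset.mul_sum]
    change P x / Q x * Q x = P x
    by_cases h : Q x = 0
    · simp [h, hPQ x h]
    · field_simp
  have hA := pinsker_aux P Q hP0 hP1 hQ0 hQ1 hsupp1
  have hB := pinsker_aux p r hp0 hp1 hr0 hr1 (by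
    rintro ⟨x, y⟩ h
    have hPx : 0 < P x := h.trans_le (hpP x y)
    exact mul_pos (div_pos hPx (hsupp1 x hPx)) (hsupp2 x y hPx h))
  have hK : klDiv p r = ∑ x1, P x1 * klDiv (fun x2 => p (x1, x2) / P x1)
      (fun x2 => q (x1, x2) / Q x1) := by
    unfold klDiv
    rw [Fintype.sum_prod_type]
    refine Finset.sum_congr rfl fun x _ => ?_
    rw [Finset.mul_sum]
    refine Finset.sum_congr rfl fun y _ => ?_
    have e : p (x, y) / r (x, y) = p (x, y) / P x / (q (x, y) / Q x) := by
      simp only [hr, div_eq_mul_inv, mul_inv, inv_inv]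
      ring
    rw [e, ← mul_assoc]
    by_cases h : P x = 0
    · have : p (x, y) = 0 := le_antisymm (h ▸ hpP x y) (hp0 _)
      simp [this]
    · rw [mul_div_cancel₀ _ h]
  have hD : statDist r q = statDist P Q := by
    unfold statDist
    rw [Fintype.sum_prod_type]
    congr 1
    refine Finset.sum_congr rfl fun x _ => ?_
    have e : ∀ y, |r (x, y) - q (x, y)| = |P x / Q x - 1| * q (x, y) := fun y => by
      rw [← abs_of_nonneg (hq0 (x, y)), ← abs_mul, abs_of_nonneg (hq0 (x, y))]
      congr 1
      simp only [hr]; ring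
    simp only [e]
    rw [← Finset.mul_sum]
    change |P x / Q x - 1| * Q x = _
    by_cases h : Q x = 0
    · simp [h, hPQ x h]
    · conv_lhs => rw [← abs_of_nonneg (hQ0 x), ← abs_mul, abs_of_nonneg (hQ0 x)]
      congr 1
      field_simp
  have hT : statDist p q ≤ statDist p r + statDist r q := by
    unfold statDist
    rw [← mul_add, ← Finset.sum_add_distrib]
    exact mul_le_mul_of_nonneg_left
      (Finset.sum_le_sum fun z _ => abs_sub_le _ _ _) (by norm_num)
  rw [hK] at hB
  rw [hD] at hT
  linarith
end

section
/- Let h : {0,1}^n → {0,1}^m be a function, let R be a random variable over a finite domain, let g be a function on the support of R with values in {0,1}^m, and let X be jointly distributed with R, taking values in {0,1}^n, such that h(X) = g(R) holds with probability 1. Set Y = g(R) and let δ ≥ 0. If H(Y) + H(X | R) ≥ n − δ, then E_{r←R}[ D_KL( X|_{R=r} ‖ Uniform(h⁻¹(g(r))) ) ] ≤ δ. -/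
open Finset Real

/-- Shannon entropy (in bits) of a distribution on a finite type. -/
noncomputable def entropy {Ω : Type*} [Fintype Ω] (p : Ω → ℝ) : ℝ :=
  -∑ x, p x * Real.logb 2 (p x)

/-- Pushforward of a distribution along a map. -/
noncomputable def push {Ω Ω' : Type*} [Fintype Ω] [DecidableEq Ω'] (p : Ω → ℝ)
    (f : Ω → Ω') : Ω' → ℝ :=
  fun y => ∑ x, if f x = y then p x else 0

/-- Let `h : {0,1}ⁿ → {0,1}^m`, `R` a finite random variable, `g` a map from `R`'s
domain to `{0,1}^m`, and `X` jointly distributed with `R` (joint law `p`) with `h(X) = g(R)` a.s.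
Set `Y = g(R)`.  If `H(Y) + H(X | R) ≥ n − δ` (with `H(X|R) = E_{r←R}[H(X|_{R=r})]`), then
`E_{r←R}[ D_KL( X|_{R=r} ‖ Uniform(h⁻¹(g(r))) ) ] ≤ δ`. -/
theorem stmt4 {ΩR : Type*} [Fintype ΩR] [DecidableEq ΩR] (n m : ℕ)
    (h : (Fin n → Bool) → (Fin m → Bool)) (g : ΩR → (Fin m → Bool))
    (p : ΩR × (Fin n → Bool) → ℝ)
    (hp0 : ∀ z, 0 ≤ p z) (hp1 : ∑ z, p z = 1)
    (has : ∀ r x, 0 < p (r, x) → h x = g r)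
    (δ : ℝ) (hδ : 0 ≤ δ)
    (hent : entropy (push p (fun rx => g rx.1)) +
        (∑ r, (∑ x, p (r, x)) * entropy (fun x => p (r, x) / ∑ x', p (r, x'))) ≥ (n : ℝ) - δ) :
    ∑ r, (∑ x, p (r, x)) *
        klDiv (fun x => p (r, x) / ∑ x', p (r, x'))
          (fun x => if h x = g r then
              ((Finset.univ.filter (fun x' => h x' = g r)).card : ℝ)⁻¹ else 0) ≤ δ := by
  classical
  set P : ΩR → ℝ := fun r => ∑ x, p (r, x) with hP
  set c : (Fin m → Bool) → ℝ :=
    fun y => ((Finset.univ.filter (fun x' => h x' = y)).card : ℝ) with hc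
  set q : (Fin m → Bool) → ℝ := push p (fun rx => g rx.1) with hq
  have hP0 : ∀ r, 0 ≤ P r := fun r => Finset.sum_nonneg (fun x _ => hp0 _)
  have hqP : ∀ y, q y = ∑ r, if g r = y then P r else 0 := by
    intro y
    simp only [hq, push, hP]
    rw [Fintype.sum_prod_type]
    refine Finset.sum_congr rfl (fun r _ => ?_)
    split_ifs <;> simp
  have hq0 : ∀ y, 0 ≤ q y := by
    intro y
    rw [hqP]
    refine Finset.sum_nonneg (fun r _ => ?_)
    split_ifs
    · exact hP0 r
    · exact le_rfl
  have hqF : ∀ F : (Fin m → Bool) → ℝ, ∑ r, P r * F (g r) = ∑ y, q y * F y := by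
    intro F
    simp only [hqP, Finset.sum_mul]
    rw [Finset.sum_comm]
    refine Finset.sum_congr rfl (fun r _ => ?_)
    simp [ite_mul]
  have hq1 : ∑ y, q y = 1 := by
    have h1 := hqF (fun _ => 1)
    simp only [mul_one] at h1
    rw [← h1, ← hp1, Fintype.sum_prod_type]
  have hc0 : ∀ y, 0 ≤ c y := fun y => Nat.cast_nonneg _
  have hcsum : ∑ y, c y = (2 : ℝ) ^ n := by
    have h1 := Finset.card_eq_sum_card_fiberwise (s := (Finset.univ : Finset (Fin n → Bool)))
      (t := (Finset.univ : Finset (Fin m → Bool))) (f := h) (fun _ _ => by simp)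
    simp only [hc]
    rw [← Nat.cast_sum, ← h1]
    simp
  have hcpos : ∀ r x, 0 < p (r, x) → 0 < c (g r) := by
    intro r x hx
    simp only [hc]
    exact_mod_cast Finset.card_pos.mpr ⟨x, by simp [has r x hx]⟩
  have hqc : ∀ y, 0 < q y → 0 < c y := by
    intro y hy
    rw [hqP] at hy
    obtain ⟨r, _, hr⟩ := Finset.exists_lt_of_sum_lt
      (s := Finset.univ) (f := fun _ : ΩR => (0 : ℝ)) (by simpa using hy)
    split_ifs at hr with hg
    · obtain ⟨x, _, hx⟩ := Finset.exists_lt_of_sum_lt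
        (s := Finset.univ) (f := fun _ : Fin n → Bool => (0 : ℝ))
        (g := fun x => p (r, x)) (by simpa using hr)
      rw [← hg]
      exact hcpos r x hx
    · exact absurd hr (lt_irrefl _)
  -- the relative entropy for a fixed `r`
  have hkl : ∀ r, P r * klDiv (fun x => p (r, x) / P r)
      (fun x => if h x = g r then (c (g r))⁻¹ else 0)
      = P r * Real.logb 2 (c (g r)) - P r * entropy (fun x => p (r, x) / P r) := by
    intro r
    rcases (hP0 r).eq_or_lt with h0 | hpos
    · rw [← h0]; simp
    have hsum : ∑ x, p (r, x) / P r = 1 := by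
      rw [← Finset.sum_div]
      exact div_self hpos.ne'
    rw [← mul_sub]
    congr 1
    unfold klDiv entropy
    rw [sub_neg_eq_add, ← one_mul (Real.logb 2 (c (g r))), ← hsum, Finset.sum_mul,
      ← Finset.sum_add_distrib]
    refine Finset.sum_congr rfl (fun x _ => ?_)
    beta_reduce
    rcases (hp0 (r, x)).eq_or_lt with h0 | hx
    · rw [← h0]; simp
    rw [if_pos (has r x hx), div_inv_eq_mul,
      Real.logb_mul (div_pos hx hpos).ne' (hcpos r x hx).ne']
    ring
  have hlog2 : 0 < Real.log 2 := Real.log_pos (by norm_num)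
  have hpt : ∀ y, q y * Real.logb 2 (c y) - q y * Real.logb 2 (q y) - q y * n
      ≤ (c y / 2 ^ n - q y) / Real.log 2 := by
    intro y
    rcases (hq0 y).eq_or_lt with h0 | hy
    · rw [← h0]
      rw [zero_mul, zero_mul, zero_mul, sub_zero, sub_zero, sub_zero]
      exact div_nonneg (div_nonneg (hc0 y) (pow_nonneg (by norm_num) n)) hlog2.le
    have hcy := hqc y hy
    have h2n : (0 : ℝ) < 2 ^ n := by positivity
    have h1 := Real.log_le_sub_one_of_pos (div_pos hcy (mul_pos h2n hy))
    rw [Real.log_div hcy.ne' (mul_pos h2n hy).ne', Real.log_mul h2n.ne' hy.ne',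
      Real.log_pow] at h1
    have h2 := mul_le_mul_of_nonneg_left h1 hy.le
    have h3 : q y * (c y / (2 ^ n * q y) - 1) = c y / 2 ^ n - q y := by
      field_simp
    rw [h3] at h2
    rw [le_div_iff₀ hlog2]
    refine le_trans (le_of_eq ?_) h2
    unfold Real.logb
    field_simp
    ring
  have hmain : ∑ y, q y * Real.logb 2 (c y) - ∑ y, q y * Real.logb 2 (q y) - n ≤ 0 := by
    have h1 := Finset.sum_le_sum (fun y (_ : y ∈ Finset.univ) => hpt y)
    rw [Finset.sum_sub_distrib, Finset.sum_sub_distrib, ← Finset.sum_mul, hq1,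
      ← Finset.sum_div, Finset.sum_sub_distrib, ← Finset.sum_div, hcsum, hq1] at h1
    simpa using h1
  have hgoal : ∑ r, P r * klDiv (fun x => p (r, x) / P r)
      (fun x => if h x = g r then (c (g r))⁻¹ else 0) ≤ δ := by
    rw [Finset.sum_congr rfl (fun r _ => hkl r), Finset.sum_sub_distrib,
      hqF (fun y => Real.logb 2 (c y))]
    have h2 : entropy q + ∑ r, P r * entropy (fun x => p (r, x) / P r) ≥ (n : ℝ) - δ := hent
    have h3 : entropy q = -∑ y, q y * Real.logb 2 (q y) := rfl
    linarith
  exact hgoal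
end

section
/- Let R and C be finite sets, let c : {0,1} × R → C be a function, let B be uniform on {0,1}, W uniform on R, and B' uniform on {0,1}, all independent. Suppose Δ( (c(B,W), B), (c(B,W), B') ) ≤ ε. Sample (b, w) uniformly from {0,1} × R, and then sample (b', w') uniformly from the set {(b'', w'') ∈ {0,1} × R : c(b'', w'') = c(b, w)}. Then Pr[b' = b] ≤ 1/2 + 2·sqrt(ε). -/
open Finset Real

lemma sum_fib_aux {R C : Type*} [Fintype R] [Fintype C] [DecidableEq C] (g : R → C) (f : C → ℝ) :
    ∑ w, f (g w) = ∑ y, ((Finset.univ.filter (fun w : R => g w = y)).card : ℝ) * f y := by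
  rw [← Finset.sum_fiberwise Finset.univ g]
  refine Finset.sum_congr rfl fun y _ => ?_
  rw [Finset.sum_congr rfl (g := fun _ => f y)]
  · simp
  · intro x hx
    rw [(Finset.mem_filter.mp hx).2]

lemma card_pair_aux {R : Type*} [Fintype R] (p : Bool × R → Prop) [DecidablePred p] :
    ((Finset.univ.filter p).card : ℝ) =
      ((Finset.univ.filter (fun w : R => p (true, w))).card : ℝ) +
      ((Finset.univ.filter (fun w : R => p (false, w))).card : ℝ) := by
  simp only [Finset.card_filter, Nat.cast_sum]
  rw [Fintype.sum_prod_type]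
  simp

lemma frac_aux (a b : ℝ) (ha : 0 ≤ a) (hb : 0 ≤ b) :
    a * (a / (a + b)) + b * (b / (a + b)) ≤ (a + b) / 2 + |a - b| / 2 := by
  rcases (add_nonneg ha hb).eq_or_lt with h | h
  · rw [← h]
    simp only [div_zero, mul_zero, add_zero, zero_div, zero_add]
    positivity
  · have h1 : a * (a / (a + b)) + b * (b / (a + b)) = (a * a + b * b) / (a + b) := by
      field_simp
    rw [h1, div_le_iff₀ h]
    have h2 : |a - b| ≤ a + b := abs_le.mpr ⟨by linarith, by linarith⟩
    have h3 := abs_mul_abs_self (a - b)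
    nlinarith [abs_nonneg (a - b)]

/-- Let `c : {0,1} × R → C` be a commitment function that is `ε`-statistically
hiding, i.e. `Δ((c(B,W),B), (c(B,W),B')) ≤ ε` for independent uniform `B, W, B'`.  Sample `(b,w)`
uniformly, then `(b',w')` uniformly from `{(b'',w'') : c(b'',w'') = c(b,w)}`.  Then
`Pr[b' = b] ≤ 1/2 + 2√ε`. -/
theorem stmt6 {R C : Type*} [Fintype R] [Fintype C] [DecidableEq C] [Nonempty R]
    (c : Bool × R → C) (ε : ℝ)
    (hhide : statDist
        (fun yb : C × Bool =>
          ((Finset.univ.filter (fun w : R => c (yb.2, w) = yb.1)).card : ℝ) /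
            (2 * (Fintype.card R : ℝ)))
        (fun yb : C × Bool =>
          ((Finset.univ.filter (fun bw : Bool × R => c bw = yb.1)).card : ℝ) /
            (2 * (2 * (Fintype.card R : ℝ)))) ≤ ε) :
    (∑ bw : Bool × R,
        ((Finset.univ.filter (fun bw' : Bool × R => c bw' = c bw ∧ bw'.1 = bw.1)).card : ℝ) /
          ((Finset.univ.filter (fun bw' : Bool × R => c bw' = c bw)).card : ℝ)) /
      (2 * (Fintype.card R : ℝ)) ≤ 1 / 2 + 2 * Real.sqrt ε := by
  have hN : (0 : ℝ) < Fintype.card R := by exact_mod_cast Fintype.card_pos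
  set N : ℝ := (Fintype.card R : ℝ) with hNdef
  let n : Bool → C → ℝ := fun b y => ((Finset.univ.filter (fun w : R => c (b, w) = y)).card : ℝ)
  have hn0 : ∀ b y, 0 ≤ n b y := fun b y => Nat.cast_nonneg _
  have hsum : ∀ b, ∑ y, n b y = N := by
    intro b
    have := sum_fib_aux (fun w => c (b, w)) (fun _ => (1 : ℝ))
    simp only [mul_one] at this
    rw [← this]
    simp [hNdef]
  have htot : ∀ y, ((Finset.univ.filter (fun bw : Bool × R => c bw = y)).card : ℝ)
      = n true y + n false y := fun y => card_pair_aux _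
  have hsame : ∀ b y, ((Finset.univ.filter
      (fun bw' : Bool × R => c bw' = y ∧ bw'.1 = b)).card : ℝ) = n b y := by
    intro b y
    rw [card_pair_aux]
    cases b <;> simp [n]
  set S : ℝ := ∑ y, |n true y - n false y| with hS
  have hd : S / (4 * N) ≤ ε := by
    refine le_trans (le_of_eq ?_) hhide
    unfold statDist
    rw [Fintype.sum_prod_type, hS, Finset.sum_div, Finset.mul_sum]
    refine Finset.sum_congr rfl fun y _ => ?_
    simp only [htot, Fintype.sum_bool]
    change _ = 1 / 2 * (|n true y / (2 * N) - _| + |n false y / (2 * N) - _|)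
    have e1 : n true y / (2 * N) - (n true y + n false y) / (2 * (2 * N))
        = (n true y - n false y) / (4 * N) := by
      field_simp
      ring
    have e2 : n false y / (2 * N) - (n true y + n false y) / (2 * (2 * N))
        = -((n true y - n false y) / (4 * N)) := by
      field_simp
      ring
    rw [e1, e2, abs_neg, abs_div, abs_of_pos (by positivity : 0 < 4 * N)]
    ring
  have hS0 : 0 ≤ S := Finset.sum_nonneg fun _ _ => abs_nonneg _
  have hS2 : S ≤ 2 * N := by
    calc S ≤ ∑ y, (n true y + n false y) := Finset.sum_le_sum fun y _ =>
          abs_le.mpr ⟨by linarith [hn0 true y, hn0 false y], by linarith [hn0 true y, hn0 false y]⟩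
      _ = 2 * N := by rw [Finset.sum_add_distrib, hsum, hsum]; ring
  have hmain : (∑ bw : Bool × R,
        ((Finset.univ.filter (fun bw' : Bool × R => c bw' = c bw ∧ bw'.1 = bw.1)).card : ℝ) /
          ((Finset.univ.filter (fun bw' : Bool × R => c bw' = c bw)).card : ℝ)) ≤ N + S / 2 := by
    simp only [hsame, htot]
    rw [Fintype.sum_prod_type, Fintype.sum_bool]
    have k := fun b => sum_fib_aux (fun w => c (b, w))
      (fun y => n b y / (n true y + n false y))
    rw [k true, k false, ← Finset.sum_add_distrib]
    calc _ ≤ ∑ y, ((n true y + n false y) / 2 + |n true y - n false y| / 2) :=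
          Finset.sum_le_sum fun y _ => frac_aux _ _ (hn0 _ _) (hn0 _ _)
      _ = N + S / 2 := by
          rw [Finset.sum_add_distrib, ← Finset.sum_div, ← Finset.sum_div,
            Finset.sum_add_distrib, hsum, hsum]
          ring
  have hδ0 : 0 ≤ S / (4 * N) := by positivity
  have hδ1 : S / (4 * N) ≤ 1 := by
    rw [div_le_one (by positivity)]
    linarith
  have hsq : S / (4 * N) ≤ √ε := by
    apply Real.le_sqrt_of_sq_le
    nlinarith
  have hfin : (N + S / 2) / (2 * N) = 1 / 2 + S / (4 * N) := by
    field_simp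
    ring
  calc _ ≤ (N + S / 2) / (2 * N) := by gcongr
    _ = 1 / 2 + S / (4 * N) := hfin
    _ ≤ _ := by linarith [Real.sqrt_nonneg ε]
end

section
/- Let R and C be finite sets, let c : {0,1}^n × R → C be a function, let B be uniform on {0,1}^n, W uniform on R, and B' uniform on {0,1}^n, all independent. Suppose Δ( (c(B,W), B), (c(B,W), B') ) ≤ ε. Sample (b, w) uniformly from {0,1}^n × R, and then sample (b', w') uniformly from the set {(b'', w'') ∈ {0,1}^n × R : c(b'', w'') = c(b, w)}. Then Pr[b' = b] ≤ 2^{−n} + 2·sqrt(ε). -/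
open Finset Real

/-- Let `c : {0,1}ⁿ × R → C` be a string-commitment function that is
`ε`-statistically hiding, i.e. `Δ((c(B,W),B), (c(B,W),B')) ≤ ε` for independent uniform `B, W, B'`
with `B, B'` uniform on `{0,1}ⁿ`.  Sample `(b,w)` uniformly, then `(b',w')` uniformly from
`{(b'',w'') : c(b'',w'') = c(b,w)}`.  Then `Pr[b' = b] ≤ 2⁻ⁿ + 2√ε`. -/
theorem stmt7 {R C : Type*} [Fintype R] [Fintype C] [DecidableEq C] [Nonempty R] (n : ℕ)
    (c : (Fin n → Bool) × R → C) (ε : ℝ)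
    (hhide : statDist
        (fun yb : C × (Fin n → Bool) =>
          ((Finset.univ.filter (fun w : R => c (yb.2, w) = yb.1)).card : ℝ) /
            ((2 : ℝ) ^ n * (Fintype.card R : ℝ)))
        (fun yb : C × (Fin n → Bool) =>
          ((Finset.univ.filter (fun bw : (Fin n → Bool) × R => c bw = yb.1)).card : ℝ) /
            ((2 : ℝ) ^ n * ((2 : ℝ) ^ n * (Fintype.card R : ℝ)))) ≤ ε) :
    (∑ bw : (Fin n → Bool) × R,
        ((Finset.univ.filter
            (fun bw' : (Fin n → Bool) × R => c bw' = c bw ∧ bw'.1 = bw.1)).card : ℝ) /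
          ((Finset.univ.filter (fun bw' : (Fin n → Bool) × R => c bw' = c bw)).card : ℝ)) /
      ((2 : ℝ) ^ n * (Fintype.card R : ℝ)) ≤ ((2 : ℝ) ^ n)⁻¹ + 2 * Real.sqrt ε := by
  classical
  set N : ℝ := (2 : ℝ) ^ n with hN
  set K : ℝ := (Fintype.card R : ℝ) with hK
  have hNpos : 0 < N := by positivity
  have hKpos : 0 < K := by
    rw [hK]; exact_mod_cast Fintype.card_pos
  have hM : 0 < N * K := by positivity
  obtain ⟨a, ha⟩ : ∃ a : C → (Fin n → Bool) → ℝ, ∀ y b,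
      a y b = ((Finset.univ.filter (fun w : R => c (b, w) = y)).card : ℝ) := ⟨_, fun _ _ => rfl⟩
  obtain ⟨A, hA⟩ : ∃ A : C → ℝ, ∀ y,
      A y = ((Finset.univ.filter (fun bw : (Fin n → Bool) × R => c bw = y)).card : ℝ) :=
    ⟨_, fun _ => rfl⟩
  have ha0 : ∀ y b, 0 ≤ a y b := fun y b => by rw [ha]; positivity
  have hA0 : ∀ y, 0 ≤ A y := fun y => by rw [hA]; positivity
  have hsum : ∀ y, ∑ b, a y b = A y := by
    intro y
    rw [hA]
    simp only [ha, Finset.card_filter, Nat.cast_sum]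
    rw [Fintype.sum_prod_type]
  have haA : ∀ y b, a y b ≤ A y := by
    intro y b
    rw [← hsum]
    exact Finset.single_le_sum (f := fun b => a y b) (fun b _ => ha0 y b) (Finset.mem_univ b)
  have hf0 : ∀ y b, 0 ≤ a y b / A y := fun y b => div_nonneg (ha0 y b) (hA0 y)
  have hf1 : ∀ y b, a y b / A y ≤ 1 := fun y b => div_le_one_of_le₀ (haA y b) (hA0 y)
  have hcard : ∀ bw : (Fin n → Bool) × R, ((Finset.univ.filter
      (fun bw' : (Fin n → Bool) × R => c bw' = c bw ∧ bw'.1 = bw.1)).card : ℝ)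
      = a (c bw) bw.1 := by
    intro bw
    rw [ha]
    congr 1
    symm
    apply Finset.card_bij (fun w _ => (bw.1, w))
    · intro w hw
      simpa using hw
    · intro w _ w' _ h
      exact (Prod.ext_iff.1 h).2
    · rintro ⟨b, w⟩ h
      simp only [Finset.mem_filter, Finset.mem_univ, true_and] at h
      obtain ⟨h1, h2⟩ := h
      subst h2
      exact ⟨w, by simpa using h1, rfl⟩
  simp only [hcard, ← hA]
  simp only [statDist, ← hA, ← ha] at hhide
  have hcardU : ∑ bw : (Fin n → Bool) × R, (1 : ℝ) = N * K := by
    simp [hN, hK]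
  rcases le_or_gt ε 1 with hε | hε
  · have hre : ∑ bw : (Fin n → Bool) × R, a (c bw) bw.1 / A (c bw)
        = ∑ yb : C × (Fin n → Bool), a yb.1 yb.2 * (a yb.1 yb.2 / A yb.1) := by
      rw [Fintype.sum_prod_type, Fintype.sum_prod_type_right]
      refine Finset.sum_congr rfl fun b _ => ?_
      rw [← Finset.sum_fiberwise (s := Finset.univ) (g := fun w : R => c (b, w))]
      refine Finset.sum_congr rfl fun y _ => ?_
      rw [Finset.sum_congr rfl (g := fun _ => a y b / A y)]
      · rw [Finset.sum_const, nsmul_eq_mul, ← ha]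
      · intro w hw
        rw [(Finset.mem_filter.1 hw).2]
    have hAsum : ∑ y, A y = N * K := by
      rw [← hcardU, ← Finset.sum_fiberwise (s := Finset.univ) (g := c)]
      refine Finset.sum_congr rfl fun y _ => ?_
      rw [hA]; simp
    have hq : ∑ yb : C × (Fin n → Bool), A yb.1 / (N * (N * K)) * (a yb.1 yb.2 / A yb.1) = N⁻¹ := by
      have h1 : ∀ yb : C × (Fin n → Bool), A yb.1 / (N * (N * K)) * (a yb.1 yb.2 / A yb.1)
          = a yb.1 yb.2 / (N * (N * K)) := by
        intro yb
        by_cases h : A yb.1 = 0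
        · have : a yb.1 yb.2 = 0 := le_antisymm (h ▸ haA _ _) (ha0 _ _)
          simp [h, this]
        · field_simp
      simp only [h1]
      rw [← Finset.sum_div, Fintype.sum_prod_type]
      simp only [hsum, hAsum]
      field_simp
    have hdiff : (∑ bw : (Fin n → Bool) × R, a (c bw) bw.1 / A (c bw)) / (N * K) - N⁻¹
        ≤ ∑ yb : C × (Fin n → Bool), |a yb.1 yb.2 / (N * K) - A yb.1 / (N * (N * K))| := by
      rw [hre, ← hq, Finset.sum_div, ← Finset.sum_sub_distrib]
      refine Finset.sum_le_sum fun yb _ => ?_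
      calc _ = (a yb.1 yb.2 / (N * K) - A yb.1 / (N * (N * K))) * (a yb.1 yb.2 / A yb.1) := by ring
        _ ≤ |a yb.1 yb.2 / (N * K) - A yb.1 / (N * (N * K))| * (a yb.1 yb.2 / A yb.1) :=
          mul_le_mul_of_nonneg_right (le_abs_self _) (hf0 _ _)
        _ ≤ _ := mul_le_of_le_one_right (abs_nonneg _) (hf1 _ _)
    have hε0 : 0 ≤ ε := le_trans (by positivity) hhide
    have : ε ≤ √ε := Real.le_sqrt_of_sq_le (by nlinarith)
    linarith
  · have h1 : (∑ bw : (Fin n → Bool) × R, a (c bw) bw.1 / A (c bw)) / (N * K) ≤ 1 := by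
      rw [div_le_one hM, ← hcardU]
      exact Finset.sum_le_sum fun bw _ => hf1 _ _
    have h2 : 1 ≤ √ε := Real.one_le_sqrt.2 hε.le
    have h3 : 0 < N⁻¹ := by positivity
    linarith
end

section
/- Let h : {0,1}^n → {0,1}^m be a function, let R be a random variable over a finite domain, let g be a function on the support of R with values in {0,1}^m, and let X be jointly distributed with R, taking values in {0,1}^n, with h(X) = g(R) holding with probability 1. Let δ ≥ 0 and suppose H(g(R)) + H(X | R) ≥ n − δ. Define the distribution D_A over pairs by: sample r ← R, then sample x₁ and x₂ independently from the conditional distribution X|_{R=r}. Define the distribution Col over pairs by: sample x₁ uniformly from {0,1}^n, then sample x₂ uniformly from h⁻¹(h(x₁)). Then Δ(D_A, Col) ≤ 2·sqrt((ln 2 / 2)·δ). -/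
open Finset Real

lemma pk_deriv (t : ℝ) (ht : 0 < t) :
    HasDerivAt (fun t : ℝ => Real.log t - (5*t^2-4*t-1)/(2*t^2+4*t))
      ((t-1)^3/(t^2*(t+2)^2)) t := by
  have h1 := Real.hasDerivAt_log ht.ne'
  have hid := hasDerivAt_id' t
  have h2 : HasDerivAt (fun t : ℝ => 5*t^2-4*t-1) (10*t-4) t := by
    have := (((hid.pow 2).const_mul 5).sub (hid.const_mul 4)).sub_const 1
    exact this.congr_deriv (by norm_num; ring)
  have h3 : HasDerivAt (fun t : ℝ => 2*t^2+4*t) (4*t+4) t := by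
    have := ((hid.pow 2).const_mul 2).add (hid.const_mul 4)
    exact this.congr_deriv (by norm_num; ring)
  have h4 : 2*t^2+4*t ≠ 0 := by positivity
  refine (h1.sub (h2.div h3 h4)).congr_deriv ?_
  have : t + 2 ≠ 0 := by positivity
  have h5 : 2*t^2+4*t = 2 * t * (t+2) := by ring
  rw [h5]
  field_simp
  ring

lemma pk_log (t : ℝ) (ht : 0 < t) : (5*t^2-4*t-1)/(2*t^2+4*t) ≤ Real.log t := by
  set F := fun t : ℝ => Real.log t - (5*t^2-4*t-1)/(2*t^2+4*t) with hF
  have hF1 : F 1 = 0 := by simp [hF]; norm_num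
  suffices h : F 1 ≤ F t by
    rw [hF1] at h
    simp only [hF] at h
    linarith
  rcases le_total 1 t with h1 | h1
  · have hm : MonotoneOn F (Set.Ici 1) := by
      apply monotoneOn_of_hasDerivWithinAt_nonneg (f' := fun t => (t-1)^3/(t^2*(t+2)^2)) (convex_Ici 1)
      · intro s hs
        have : (0:ℝ) < s := lt_of_lt_of_le one_pos hs
        exact (pk_deriv s this).continuousAt.continuousWithinAt
      · intro s hs
        rw [interior_Ici] at hs
        have hs' : (1:ℝ) < s := hs
        exact (pk_deriv s (by linarith)).hasDerivWithinAt
      · intro s hs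
        rw [interior_Ici] at hs
        have hs' : (1:ℝ) < s := hs
        have : 0 < s - 1 := by linarith
        positivity
    exact hm (Set.mem_Ici.2 le_rfl) h1 h1
  · have hm : AntitoneOn F (Set.Ioc 0 1) := by
      apply antitoneOn_of_hasDerivWithinAt_nonpos (f' := fun t => (t-1)^3/(t^2*(t+2)^2)) (convex_Ioc 0 1)
      · intro s hs
        exact (pk_deriv s hs.1).continuousAt.continuousWithinAt
      · intro s hs
        rw [interior_Ioc] at hs
        exact (pk_deriv s hs.1).hasDerivWithinAt
      · intro s hs
        rw [interior_Ioc] at hs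
        apply div_nonpos_of_nonpos_of_nonneg _ (by positivity)
        have h1 : s - 1 ≤ 0 := by linarith [hs.2]
        nlinarith [sq_nonneg (s-1)]
    exact hm ⟨ht, h1⟩ ⟨one_pos, le_rfl⟩ h1

lemma pk_gen (a b : ℝ) (ha : 0 ≤ a) (hb : 0 ≤ b) (hab : 0 < a → 0 < b) :
    3 * (a-b)^2 ≤ (2*a+4*b) * (a * (Real.log a - Real.log b) - a + b) := by
  rcases ha.eq_or_lt with rfl | ha
  · nlinarith
  have hb := hab ha
  rw [← Real.log_div ha.ne' hb.ne']
  have h := pk_log (a/b) (by positivity)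
  have e : (5*(a/b)^2-4*(a/b)-1)/(2*(a/b)^2+4*(a/b)) = (5*a^2-4*a*b-b^2)/(a*(2*a+4*b)) := by
    field_simp
  rw [e, div_le_iff₀ (by positivity)] at h
  nlinarith

lemma gibbs1 (a b : ℝ) (ha : 0 ≤ a) (hb : 0 ≤ b) (hab : 0 < a → 0 < b) :
    0 ≤ a * (Real.log a - Real.log b) - a + b := by
  have h := pk_gen a b ha hb hab
  by_contra hc
  push Not at hc
  have h1 : 0 ≤ 2*a+4*b := by positivity
  rcases h1.eq_or_lt with h2 | h2
  · have : a = 0 := by linarith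
    have hb0 : b = 0 := by linarith
    subst hb0
    simp [this] at hc
  · nlinarith [sq_nonneg (a-b)]

lemma gibbs {ι : Type*} [Fintype ι] (p w : ι → ℝ) (hp : ∀ i, 0 ≤ p i) (hw : ∀ i, 0 ≤ w i)
    (hpw : ∀ i, 0 < p i → 0 < w i) (hp1 : ∑ i, p i = 1) (hw1 : ∑ i, w i ≤ 1) :
    0 ≤ ∑ i, p i * (Real.log (p i) - Real.log (w i)) := by
  have := Finset.sum_nonneg (s := Finset.univ) fun i _ => gibbs1 (p i) (w i) (hp i) (hw i) (hpw i)
  rw [Finset.sum_add_distrib, Finset.sum_sub_distrib] at this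
  linarith

lemma pinsker {ι : Type*} [Fintype ι] (p w : ι → ℝ) (hp : ∀ i, 0 ≤ p i) (hw : ∀ i, 0 ≤ w i)
    (hpw : ∀ i, 0 < p i → 0 < w i) (hp1 : ∑ i, p i = 1) (hw1 : ∑ i, w i ≤ 1) :
    (∑ i, |p i - w i|)^2 ≤ 2 * ∑ i, p i * (Real.log (p i) - Real.log (w i)) := by
  set f : ι → ℝ := fun i => (2 * p i + 4 * w i)/3 with hf
  set k : ι → ℝ := fun i => p i * (Real.log (p i) - Real.log (w i)) - p i + w i with hk
  have hf0 : ∀ i, 0 ≤ f i := fun i => by have := hp i; have := hw i; simp only [hf]; positivity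
  have hk0 : ∀ i, 0 ≤ k i := fun i => gibbs1 (p i) (w i) (hp i) (hw i) (hpw i)
  have h1 : ∑ i, |p i - w i| ≤ ∑ i, √(f i * k i) := by
    refine Finset.sum_le_sum fun i _ => ?_
    apply Real.abs_le_sqrt
    have := pk_gen (p i) (w i) (hp i) (hw i) (hpw i)
    simp only [hf, hk]
    linarith
  have h2 : (∑ i, √(f i * k i))^2 ≤ (∑ i, f i) * ∑ i, k i :=
    Finset.sum_sq_le_sum_mul_sum_of_sq_le_mul _ (fun i _ => hf0 i) (fun i _ => hk0 i)
      (fun i _ => (Real.sq_sqrt (mul_nonneg (hf0 i) (hk0 i))).le)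
  have h3 : (∑ i, |p i - w i|)^2 ≤ (∑ i, √(f i * k i))^2 :=
    pow_le_pow_left₀ (Finset.sum_nonneg fun i _ => abs_nonneg _) h1 2
  have hfs : ∑ i, f i ≤ 2 := by
    simp only [hf]
    rw [← Finset.sum_div, Finset.sum_add_distrib, ← Finset.mul_sum, ← Finset.mul_sum]
    linarith
  have hks : ∑ i, k i ≤ ∑ i, p i * (Real.log (p i) - Real.log (w i)) := by
    simp only [hk]
    rw [Finset.sum_add_distrib, Finset.sum_sub_distrib]
    linarith
  have hks0 : 0 ≤ ∑ i, k i := Finset.sum_nonneg fun i _ => hk0 i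
  nlinarith

lemma sum_push {Ω Y : Type*} [Fintype Ω] [Fintype Y] [DecidableEq Y] (p : Ω → ℝ) (f : Ω → Y)
    (φ : Y → ℝ) : ∑ y, push p f y * φ y = ∑ z, p z * φ (f z) := by
  simp only [push, Finset.sum_mul]
  rw [Finset.sum_comm]
  refine Finset.sum_congr rfl fun z _ => ?_
  simp [ite_mul]

lemma main_gen {R X Y : Type*} [Fintype R] [Fintype X] [Fintype Y] [DecidableEq Y]
    (h : X → Y) (g : R → Y) (p : R × X → ℝ)
    (hp0 : ∀ z, 0 ≤ p z) (hp1 : ∑ z, p z = 1)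
    (has : ∀ r x, 0 < p (r, x) → h x = g r)
    (N : ℝ) (hN : N = Fintype.card X) (hNpos : 0 < N) (δ : ℝ)
    (hent : entropy (push p (fun rx => g rx.1)) +
        (∑ r, (∑ x, p (r, x)) * entropy (fun x => p (r, x) / ∑ x', p (r, x')))
          ≥ Real.logb 2 N - δ) :
    statDist
      (fun x12 : X × X =>
        ∑ r, (∑ x, p (r, x)) *
          ((p (r, x12.1) / ∑ x', p (r, x')) * (p (r, x12.2) / ∑ x', p (r, x'))))
      (fun x12 : X × X =>
        N⁻¹ *
          (if h x12.2 = h x12.1 then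
            ((Finset.univ.filter (fun x' => h x' = h x12.1)).card : ℝ)⁻¹ else 0)) ≤
      2 * Real.sqrt ((Real.log 2 / 2) * δ) := by
  set P : R → ℝ := fun r => ∑ x, p (r, x) with hP
  set PX : X → ℝ := fun x => ∑ r, p (r, x) with hPX
  set q : Y → ℝ := push p (fun rx => g rx.1) with hq
  set c : Y → ℝ := fun y => ((Finset.univ.filter (fun x' => h x' = y)).card : ℝ) with hc
  have hpP : ∀ r x, p (r, x) ≤ P r := fun r x =>
    Finset.single_le_sum (f := fun x => p (r, x)) (fun i _ => hp0 _) (Finset.mem_univ x)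
  have hpPX : ∀ r x, p (r, x) ≤ PX x := fun r x =>
    Finset.single_le_sum (f := fun r => p (r, x)) (fun i _ => hp0 _) (Finset.mem_univ r)
  have hP0 : ∀ r, 0 ≤ P r := fun r => Finset.sum_nonneg fun i _ => hp0 _
  have hPX0 : ∀ x, 0 ≤ PX x := fun x => Finset.sum_nonneg fun i _ => hp0 _
  have hc0 : ∀ y, 0 ≤ c y := fun y => Nat.cast_nonneg _
  have hqP : ∀ y, q y = ∑ r, if g r = y then P r else 0 := by
    intro y
    simp only [hq, push, hP]
    rw [Fintype.sum_prod_type]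
    refine Finset.sum_congr rfl fun r _ => ?_
    split_ifs <;> simp
  have hq0 : ∀ y, 0 ≤ q y := fun y => by
    rw [hqP]; exact Finset.sum_nonneg fun r _ => by split_ifs; exacts [hP0 r, le_rfl]
  have hPq : ∀ r, P r ≤ q (g r) := by
    intro r
    rw [hqP]
    have := Finset.single_le_sum (f := fun r' => if g r' = g r then P r' else 0)
      (fun i _ => by split_ifs; exacts [hP0 i, le_rfl]) (Finset.mem_univ r)
    simpa using this
  have hcpos : ∀ x, 0 < c (h x) := by
    intro x
    simp only [hc]
    exact_mod_cast Finset.card_pos.2 ⟨x, by simp⟩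
  have hcsum : ∑ y, c y = N := by
    rw [hN]
    simp only [hc]
    rw [← Nat.cast_sum, ← Finset.card_eq_sum_card_fiberwise (fun x _ => Finset.mem_univ (h x))]
    simp
  have hPsum : ∑ r, P r = 1 := by rw [← hp1, Fintype.sum_prod_type]
  have hPXsum : ∑ x, PX x = 1 := by rw [← hp1, Fintype.sum_prod_type_right]
  have hl2 : 0 < Real.log 2 := Real.log_pos (by norm_num)
  -- the main divergence
  have hK : ∑ z, p z * (Real.log (p z) - Real.log (P z.1) + Real.log (q (g z.1)) + Real.log N)
      ≤ Real.log 2 * δ := by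
    have e1 : entropy q = -(∑ z, p z * Real.log (q (g z.1))) / Real.log 2 := by
      unfold entropy
      rw [hq, sum_push p (fun rx => g rx.1) (fun y => Real.logb 2 (push p (fun rx => g rx.1) y)),
        neg_div, Finset.sum_div]
      simp only [Real.logb, mul_div_assoc]
    have e2 : (∑ r, P r * entropy (fun x => p (r, x) / P r))
        = -(∑ z, p z * (Real.log (p z) - Real.log (P z.1))) / Real.log 2 := by
      rw [neg_div, Finset.sum_div, Fintype.sum_prod_type, ← Finset.sum_neg_distrib]
      refine Finset.sum_congr rfl fun r _ => ?_
      unfold entropy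
      rw [mul_neg, Finset.mul_sum]
      congr 1
      refine Finset.sum_congr rfl fun x _ => ?_
      rcases (hp0 (r, x)).eq_or_lt with h0 | h0
      · simp [← h0]
      · have hPp : 0 < P r := h0.trans_le (hpP r x)
        rw [Real.logb, Real.log_div h0.ne' hPp.ne']
        field_simp
    have e3 : ∑ z, p z * (Real.log (p z) - Real.log (P z.1) + Real.log (q (g z.1)) + Real.log N)
        = ∑ z, p z * (Real.log (p z) - Real.log (P z.1)) + ∑ z, p z * Real.log (q (g z.1))
          + Real.log N := by
      simp only [mul_add, Finset.sum_add_distrib, ← Finset.sum_mul, hp1, one_mul]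
    rw [e1, e2, Real.logb] at hent
    rw [e3]
    have := mul_le_mul_of_nonneg_left hent hl2.le
    field_simp at this
    linarith
  -- marginal on x
  have hG1 : ∑ x, PX x * (Real.log (PX x) - Real.log N⁻¹) ≤ Real.log 2 * δ := by
    refine le_trans ?_ hK
    have hg := gibbs p (fun z => if h z.2 = g z.1 then PX z.2 * (P z.1 / q (g z.1)) else 0) hp0
      (fun z => by
        split_ifs
        · exact mul_nonneg (hPX0 _) (div_nonneg (hP0 _) (hq0 _))
        · exact le_rfl)
      (by
        rintro ⟨r, x⟩ hz
        have h1 := hz.trans_le (hpP r x)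
        have h2 := hz.trans_le (hpPX r x)
        have h3 := h1.trans_le (hPq r)
        simp only [has r x hz, if_true]
        positivity) hp1
      (by
        rw [Fintype.sum_prod_type_right, ← hPXsum]
        refine Finset.sum_le_sum fun x _ => ?_
        have : ∀ r, (if h x = g r then PX x * (P r / q (g r)) else 0)
            = PX x * ((if g r = h x then P r else 0) / q (h x)) := by
          intro r
          by_cases hh : h x = g r
          · simp [hh]
          · simp [hh, Ne.symm hh]
        simp only [this]
        rw [← Finset.mul_sum, ← Finset.sum_div, ← hqP]
        exact mul_le_of_le_one_right (hPX0 x) (div_self_le_one _))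
    have e : ∑ x, PX x * (Real.log (PX x) - Real.log N⁻¹)
        = ∑ z, p z * (Real.log (PX z.2) - Real.log N⁻¹) := by
      rw [Fintype.sum_prod_type_right]
      simp only [hPX, Finset.sum_mul]
    rw [e, ← sub_nonneg, ← Finset.sum_sub_distrib]
    refine hg.trans_eq (Finset.sum_congr rfl ?_)
    rintro ⟨r, x⟩ -
    rcases (hp0 (r, x)).eq_or_lt with h0 | hz
    · simp [← h0]
    · have h1 := hz.trans_le (hpP r x)
      have h2 := hz.trans_le (hpPX r x)
      have h3 := h1.trans_le (hPq r)
      simp only [has r x hz, if_true]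
      rw [Real.log_mul h2.ne' (by positivity), Real.log_div h1.ne' h3.ne', Real.log_inv]
      ring
  set u : R → X → ℝ := fun r x => if h x = g r then (c (g r))⁻¹ else 0 with hu
  have hu0 : ∀ r x, 0 ≤ u r x := fun r x => by
    simp only [hu]; split_ifs; exacts [inv_nonneg.2 (hc0 _), le_rfl]
  have hsumu : ∀ y, ∑ x, (if h x = y then (c y)⁻¹ else 0) ≤ 1 := by
    intro y
    rw [← Finset.sum_filter, Finset.sum_const, nsmul_eq_mul]
    exact mul_inv_le_one
  have hupos : ∀ r x, 0 < p (r, x) → 0 < c (g r) := fun r x hz => has r x hz ▸ hcpos x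
  have hG2 : ∑ z, p z * (Real.log (p z) - Real.log (P z.1 * u z.1 z.2)) ≤ Real.log 2 * δ := by
    refine le_trans ?_ hK
    have hg := gibbs p (fun z => p z * (c (g z.1) / (N * q (g z.1)))) hp0
      (fun z => mul_nonneg (hp0 _) (div_nonneg (hc0 _) (mul_nonneg hNpos.le (hq0 _))))
      (by
        rintro ⟨r, x⟩ hz
        have h1 := hz.trans_le (hpP r x)
        have h3 := h1.trans_le (hPq r)
        have h4 := hupos r x hz
        dsimp only
        positivity) hp1
      (by
        rw [← sum_push p (fun z => g z.1) (fun y => c y / (N * q y))]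
        calc _ ≤ ∑ y, c y / N := by
              refine Finset.sum_le_sum fun y _ => ?_
              have : push p (fun z => g z.1) y * (c y / (N * q y)) = c y / N * (q y / q y) := by
                change q y * _ = _
                rw [mul_comm N, ← div_div]; ring
              rw [this]
              exact mul_le_of_le_one_right (div_nonneg (hc0 _) hNpos.le) (div_self_le_one _)
          _ = 1 := by rw [← Finset.sum_div, hcsum, div_self hNpos.ne']
          _ ≤ 1 := le_rfl)
    rw [← sub_nonneg, ← Finset.sum_sub_distrib]
    refine hg.trans_eq (Finset.sum_congr rfl ?_)
    rintro ⟨r, x⟩ -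
    rcases (hp0 (r, x)).eq_or_lt with h0 | hz
    · simp [← h0]
    · have h1 := hz.trans_le (hpP r x)
      have h3 := h1.trans_le (hPq r)
      have h4 := hupos r x hz
      simp only [hu, has r x hz, if_true]
      rw [Real.log_mul hz.ne' (by positivity), Real.log_div h4.ne' (by positivity),
        Real.log_mul hNpos.ne' h3.ne', Real.log_mul h1.ne' (by positivity), Real.log_inv]
      ring
  have hT1 : (∑ x, |PX x - N⁻¹|)^2 ≤ 2 * (Real.log 2 * δ) := by
    refine (pinsker PX (fun _ => N⁻¹) hPX0 (fun _ => by positivity) (fun _ _ => by positivity)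
      hPXsum ?_).trans (by linarith)
    simp [← hN, hNpos.ne']
  have hT2 : (∑ z : R × X, |p z - P z.1 * u z.1 z.2|)^2 ≤ 2 * (Real.log 2 * δ) := by
    refine (pinsker p (fun z => P z.1 * u z.1 z.2) hp0
      (fun _ => mul_nonneg (hP0 _) (hu0 _ _)) ?_ hp1 ?_).trans (by linarith)
    · rintro ⟨r, x⟩ hz
      have h1 := hz.trans_le (hpP r x)
      have h4 := hupos r x hz
      simp only [hu, has r x hz, if_true]
      positivity
    · rw [Fintype.sum_prod_type, ← hPsum]
      refine Finset.sum_le_sum fun r _ => ?_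
      dsimp only
      rw [← Finset.mul_sum]
      exact mul_le_of_le_one_right (hP0 r) (hsumu (g r))
  have hT1' := Real.le_sqrt_of_sq_le hT1
  have hT2' := Real.le_sqrt_of_sq_le hT2
  -- hybrid
  have hDA : ∀ x₁ x₂, (∑ r, P r * ((p (r, x₁) / P r) * (p (r, x₂) / P r)))
      = ∑ r, p (r, x₁) * (p (r, x₂) / P r) := by
    intro x₁ x₂
    refine Finset.sum_congr rfl fun r _ => ?_
    rcases (hP0 r).eq_or_lt with h0 | h0
    · simp [← h0]
    · field_simp
  have hD' : ∀ x₁ x₂, ∑ r, p (r, x₁) * u r x₂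
      = PX x₁ * (if h x₂ = h x₁ then (c (h x₁))⁻¹ else 0) := by
    intro x₁ x₂
    simp only [hPX, Finset.sum_mul]
    refine Finset.sum_congr rfl fun r _ => ?_
    rcases (hp0 (r, x₁)).eq_or_lt with h0 | h0
    · simp [← h0]
    · simp only [hu, has r x₁ h0]
  have hA : ∑ x₁, ∑ x₂, |∑ r, p (r, x₁) * (p (r, x₂) / P r) - ∑ r, p (r, x₁) * u r x₂|
      ≤ ∑ z : R × X, |p z - P z.1 * u z.1 z.2| := by
    calc _ ≤ ∑ x₁, ∑ x₂, ∑ r, p (r, x₁) * |p (r, x₂) / P r - u r x₂| := by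
          refine Finset.sum_le_sum fun x₁ _ => Finset.sum_le_sum fun x₂ _ => ?_
          rw [← Finset.sum_sub_distrib]
          refine (Finset.abs_sum_le_sum_abs _ _).trans_eq (Finset.sum_congr rfl fun r _ => ?_)
          rw [← mul_sub, abs_mul, abs_of_nonneg (hp0 _)]
      _ = ∑ r, ∑ x₂, P r * |p (r, x₂) / P r - u r x₂| := by
          rw [Finset.sum_comm, Finset.sum_comm (γ := R)]
          refine Finset.sum_congr rfl fun x₂ _ => ?_
          rw [Finset.sum_comm]
          refine Finset.sum_congr rfl fun r _ => ?_
          rw [← Finset.sum_mul]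
      _ = _ := by
          rw [Fintype.sum_prod_type]
          refine Finset.sum_congr rfl fun r _ => Finset.sum_congr rfl fun x _ => ?_
          rcases (hP0 r).eq_or_lt with h0 | h0
          · have : p (r, x) = 0 := le_antisymm (h0 ▸ hpP r x) (hp0 _)
            simp [← h0, this]
          · rw [← abs_of_pos h0, ← abs_mul, abs_of_pos h0, mul_sub, mul_div_cancel₀ _ h0.ne']
  have hB : ∑ x₁, ∑ x₂, |PX x₁ * (if h x₂ = h x₁ then (c (h x₁))⁻¹ else 0)
      - N⁻¹ * (if h x₂ = h x₁ then (c (h x₁))⁻¹ else 0)| ≤ ∑ x, |PX x - N⁻¹| := by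
    refine Finset.sum_le_sum fun x₁ _ => ?_
    have : ∀ x₂, |PX x₁ * (if h x₂ = h x₁ then (c (h x₁))⁻¹ else 0)
      - N⁻¹ * (if h x₂ = h x₁ then (c (h x₁))⁻¹ else 0)|
        = |PX x₁ - N⁻¹| * (if h x₂ = h x₁ then (c (h x₁))⁻¹ else 0) := by
      intro x₂
      rw [← sub_mul, abs_mul]
      congr 1
      apply abs_of_nonneg
      split_ifs
      exacts [inv_nonneg.2 (hc0 _), le_rfl]
    simp only [this]
    rw [← Finset.mul_sum]
    exact mul_le_of_le_one_right (abs_nonneg _) (hsumu _)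
  have hfin : 2 * √(Real.log 2 / 2 * δ) = √(2 * (Real.log 2 * δ)) := by
    rw [show 2 * (Real.log 2 * δ) = 2^2 * (Real.log 2 / 2 * δ) by ring,
      Real.sqrt_mul (x := 2^2) (by norm_num), Real.sqrt_sq (by norm_num)]
  rw [hfin]
  unfold statDist
  rw [Fintype.sum_prod_type]
  have hC : ∑ x₁, ∑ x₂, |(∑ r, P r * ((p (r, x₁) / P r) * (p (r, x₂) / P r)))
      - N⁻¹ * (if h x₂ = h x₁ then (c (h x₁))⁻¹ else 0)| ≤
      ∑ z : R × X, |p z - P z.1 * u z.1 z.2| + ∑ x, |PX x - N⁻¹| := by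
    refine le_trans ?_ (add_le_add hA hB)
    rw [← Finset.sum_add_distrib]
    refine Finset.sum_le_sum fun x₁ _ => ?_
    rw [← Finset.sum_add_distrib]
    refine Finset.sum_le_sum fun x₂ _ => ?_
    rw [hDA, ← hD']
    exact abs_sub_le _ _ _
  have hC' := hC.trans (add_le_add hT2' hT1')
  calc _ ≤ 1 / 2 * (√(2 * (Real.log 2 * δ)) + √(2 * (Real.log 2 * δ))) :=
        mul_le_mul_of_nonneg_left hC' (by norm_num)
    _ = _ := by ring

/-- Let `h : {0,1}ⁿ → {0,1}^m`, `R` a finite random variable, `g` a map into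
`{0,1}^m`, `X` jointly distributed with `R` (joint law `p`) with `h(X) = g(R)` a.s., and `δ ≥ 0`
with `H(g(R)) + H(X | R) ≥ n − δ`.  Let `D_A` sample `r ← R` and then `x₁, x₂` independently from
`X|_{R=r}`, and let `Col` sample `x₁` uniform on `{0,1}ⁿ` and `x₂` uniform on `h⁻¹(h(x₁))`.  Then
`Δ(D_A, Col) ≤ 2·√((ln 2 / 2)·δ)`. -/
theorem stmt11 {ΩR : Type*} [Fintype ΩR] [DecidableEq ΩR] (n m : ℕ)
    (h : (Fin n → Bool) → (Fin m → Bool)) (g : ΩR → (Fin m → Bool))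
    (p : ΩR × (Fin n → Bool) → ℝ)
    (hp0 : ∀ z, 0 ≤ p z) (hp1 : ∑ z, p z = 1)
    (has : ∀ r x, 0 < p (r, x) → h x = g r)
    (δ : ℝ) (hδ : 0 ≤ δ)
    (hent : entropy (push p (fun rx => g rx.1)) +
        (∑ r, (∑ x, p (r, x)) * entropy (fun x => p (r, x) / ∑ x', p (r, x'))) ≥ (n : ℝ) - δ) :
    statDist
      (fun x12 : (Fin n → Bool) × (Fin n → Bool) =>
        ∑ r, (∑ x, p (r, x)) *
          ((p (r, x12.1) / ∑ x', p (r, x')) * (p (r, x12.2) / ∑ x', p (r, x'))))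
      (fun x12 : (Fin n → Bool) × (Fin n → Bool) =>
        ((2 : ℝ) ^ n)⁻¹ *
          (if h x12.2 = h x12.1 then
            ((Finset.univ.filter (fun x' => h x' = h x12.1)).card : ℝ)⁻¹ else 0)) ≤
      2 * Real.sqrt ((Real.log 2 / 2) * δ) := by
  refine main_gen h g p hp0 hp1 has ((2:ℝ)^n) (by simp) (by positivity) δ ?_
  rw [← Real.rpow_natCast, Real.logb_rpow (by norm_num) (by norm_num)]
  exact hent
end
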